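/- Let n ≥ 1, let Φ: ℝⁿ → ℝ be a symmetric gauge function, let A ∈ ℂ^{n×n} be negative-imaginary (i.e., sectorial with all canonical phases in (−π,0]), and let 0 ≤ r ≤ n. Then the minimum of Φ(φ₁(E⁻¹AE⁻¹),…,φₙ(E⁻¹AE⁻¹)) over all sectorial matrices E ∈ ℂ^{n×n} such that prank(E) ≤ r and E⁻¹AE⁻¹ is negative-imaginary equals Φ(φ₁(A),…,φ_{n−r}(A),0,…,0), and this minimum is attained at every Ê such that Ê⁻¹ ∈ S_p(A⁻¹,r). -/

import Mathlib

noncomputable section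

open Matrix
open scoped Classical ComplexOrder

namespace LowPrank

variable {n : ℕ}

/-- A matrix is sectorial if its numerical range does not contain `0`
(`star x ⬝ᵥ x = 1` encodes `‖x‖₂ = 1`). -/
def IsSectorial (A : Matrix (Fin n) (Fin n) ℂ) : Prop :=
  ∀ x : Fin n → ℂ, star x ⬝ᵥ x = 1 → star x ⬝ᵥ A.mulVec x ≠ 0

/-- The diagonal unitary matrix `diag (e^{iφ₁}, …, e^{iφₙ})`. -/
def phaseDiag (φ : Fin n → ℝ) : Matrix (Fin n) (Fin n) ℂ :=
  Matrix.diagonal fun k => Complex.exp (Complex.I * (φ k : ℂ))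

/-- `A = Tᴴ diag (e^{iφ₁}, …, e^{iφₙ}) T` with `T` invertible. -/
def IsSectorialDecomp (A T : Matrix (Fin n) (Fin n) ℂ) (φ : Fin n → ℝ) : Prop :=
  IsUnit T ∧ A = Tᴴ * phaseDiag φ * T

/-- `φ` is the (sorted, normalized) vector of canonical phases of `A`:
nonincreasing, spread `< π`, midpoint of the range in `(-π, π]`, and realizing a
sectorial decomposition of `A`. -/
def IsCanonicalPhases (A : Matrix (Fin n) (Fin n) ℂ) (φ : Fin n → ℝ) : Prop :=
  Antitone φ ∧ (∀ i j, φ i - φ j < Real.pi) ∧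
    (-Real.pi < ((⨆ i, φ i) + ⨅ i, φ i) / 2) ∧ (((⨆ i, φ i) + ⨅ i, φ i) / 2 ≤ Real.pi) ∧
    ∃ T, IsSectorialDecomp A T φ

/-- The canonical phases `φ₁(A) ≥ ⋯ ≥ φₙ(A)` of a sectorial matrix
(`phases A k` is the `(k+1)`-st largest canonical phase). -/
noncomputable def phases (A : Matrix (Fin n) (Fin n) ℂ) : Fin n → ℝ :=
  if h : ∃ φ, IsCanonicalPhases A φ then h.choose else 0

/-- The phase-rank: the number of nonzero canonical phases. -/
noncomputable def prank (A : Matrix (Fin n) (Fin n) ℂ) : ℕ :=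
  {k : Fin n | phases A k ≠ 0}.ncard

/-- Positive-imaginary: sectorial with all canonical phases in `[0, π)`. -/
def PositiveImaginary (A : Matrix (Fin n) (Fin n) ℂ) : Prop :=
  IsSectorial A ∧ ∀ k, phases A k ∈ Set.Ico 0 Real.pi

/-- Symmetric gauge function. -/
structure IsSymmetricGauge (Φ : (Fin n → ℝ) → ℝ) : Prop where
  pos : ∀ x, x ≠ 0 → 0 < Φ x
  smul : ∀ (ρ : ℝ) (x), Φ (ρ • x) = |ρ| * Φ x
  subadd : ∀ x y, Φ (x + y) ≤ Φ x + Φ y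
  perm : ∀ (σ : Equiv.Perm (Fin n)) (x), Φ (x ∘ σ) = Φ x
  abs : ∀ x, Φ (fun k => |x k|) = Φ x

/-- The set `S_p(A, r)` of `r`-half-truncations of `A`. -/
def Sp (A : Matrix (Fin n) (Fin n) ℂ) (r : ℕ) : Set (Matrix (Fin n) (Fin n) ℂ) :=
  {E | ∃ T, IsSectorialDecomp A T (phases A) ∧
    E = Tᴴ * Matrix.diagonal (fun k : Fin n =>
      if (k : ℕ) < r then Complex.exp (Complex.I * ((phases A k / 2 : ℝ) : ℂ)) else 1) * T}


/-- Negative-imaginary: sectorial with all canonical phases in `(-π, 0]`. -/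
def NegativeImaginary (A : Matrix (Fin n) (Fin n) ℂ) : Prop :=
  IsSectorial A ∧ ∀ k, phases A k ∈ Set.Ioc (-Real.pi) 0


/-!
Let `B = E⁻¹AE⁻¹` with `prank E ≤ r`. The matrices `E` and `Eᴴ` agree on a subspace of codimension
at most `r`, and for `x` in it the quadratic form of `B` at `Ex` equals that of `A` at `x`. A
Courant–Fischer argument for canonical phases then gives `φ_{k+r}(B) ≤ φ_k(A) ≤ 0`, and the lower
bound follows because a symmetric gauge function is monotone in the moduli of its arguments. For
`E⁻¹ ∈ Sp A⁻¹ r`, one congruence diagonalizes both `A⁻¹` and `E⁻¹`, so that `B` is congruent to the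
diagonal matrix obtained from that of `A` by cancelling the `r` phases furthest from `0`.

Canonical phases exist because the numerical range is compact and convex (Toeplitz–Hausdorff): some
rotation of a sectorial matrix has positive definite Hermitian part, which is diagonalized by
congruence simultaneously with the skew-Hermitian part.
-/

section QuadForm

variable {ι : Type*} [Fintype ι]

/-- The quadratic form `x ↦ xᴴ M x` of a complex matrix, through which the phases of different
matrices are compared. -/
def quadForm (M : Matrix ι ι ℂ) (x : ι → ℂ) : ℂ := star x ⬝ᵥ M *ᵥ x

lemma continuous_quadForm (M : Matrix ι ι ℂ) : Continuous (quadForm M) := by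
  unfold quadForm
  fun_prop

lemma quadForm_smul_right (M : Matrix ι ι ℂ) (c : ℂ) (x : ι → ℂ) :
    quadForm M (c • x) = (‖c‖ ^ 2 : ℝ) * quadForm M x := by
  simp only [quadForm, star_smul, mulVec_smul, smul_dotProduct, dotProduct_smul, smul_eq_mul]
  rw [← mul_assoc, Complex.star_def, Complex.mul_conj']
  push_cast
  rfl

lemma quadForm_smul_left (c : ℂ) (M : Matrix ι ι ℂ) (x : ι → ℂ) :
    quadForm (c • M) x = c * quadForm M x := by
  simp only [quadForm, smul_mulVec, dotProduct_smul, smul_eq_mul]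

lemma quadForm_smul_add_smul (M : Matrix ι ι ℂ) (s : ℝ) (u : ℂ) (x y : ι → ℂ) :
    quadForm M ((s : ℂ) • x + u • y) = (s : ℂ) ^ 2 * quadForm M x +
      s * (u * (star x ⬝ᵥ M *ᵥ y) + star u * (star y ⬝ᵥ M *ᵥ x)) +
        (‖u‖ : ℂ) ^ 2 * quadForm M y := by
  simp only [quadForm, star_add, star_smul, mulVec_add, mulVec_smul, smul_dotProduct,
    dotProduct_smul, smul_eq_mul, add_dotProduct, dotProduct_add, ← Complex.mul_conj',
    Complex.star_def, Complex.conj_ofReal]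
  ring

lemma quadForm_conjTranspose_mul_mul {κ : Type*} [Fintype κ] (M : Matrix κ κ ℂ)
    (T : Matrix κ ι ℂ) (x : ι → ℂ) : quadForm (Tᴴ * M * T) x = quadForm M (T *ᵥ x) := by
  simp only [quadForm, star_mulVec, dotProduct_mulVec, vecMul_vecMul]

lemma quadForm_diagonal [DecidableEq ι] (d : ι → ℂ) (x : ι → ℂ) :
    quadForm (diagonal d) x = ∑ j, (‖x j‖ ^ 2 : ℝ) * d j := by
  simp only [quadForm, dotProduct, mulVec_diagonal, Pi.star_apply]
  refine Finset.sum_congr rfl fun j _ => ?_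
  push_cast
  rw [← Complex.mul_conj', Complex.star_def]
  ring

lemma quadForm_sub_smul_one [DecidableEq ι] (M : Matrix ι ι ℂ) (c : ℂ) (x : ι → ℂ) :
    quadForm (M - c • 1) x = quadForm M x - c * (star x ⬝ᵥ x) := by
  simp only [quadForm, sub_mulVec, smul_mulVec, one_mulVec, dotProduct_sub, dotProduct_smul,
    smul_eq_mul]

lemma star_dotProduct_self_eq_norm_sq (x : ι → ℂ) :
    star x ⬝ᵥ x = (‖WithLp.toLp 2 x‖ : ℂ) ^ 2 := by
  rw [dotProduct_comm, ← EuclideanSpace.inner_toLp_toLp, inner_self_eq_norm_sq_to_K]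
  rfl

lemma exists_pos_star_dotProduct_smul_self_eq_one {x : ι → ℂ} (hx : x ≠ 0) :
    ∃ c : ℝ, 0 < c ∧ star ((c : ℂ) • x) ⬝ᵥ ((c : ℂ) • x) = 1 := by
  have hpos : 0 < ‖WithLp.toLp 2 x‖ := by simpa using hx
  refine ⟨‖WithLp.toLp 2 x‖⁻¹, inv_pos.2 hpos, ?_⟩
  rw [star_dotProduct_self_eq_norm_sq, WithLp.toLp_smul, norm_smul, Complex.norm_real, norm_inv,
    norm_norm, inv_mul_cancel₀ hpos.ne', Complex.ofReal_one, one_pow]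

lemma exists_norm_eq_one_mul_add_star_mul_eq_ofReal (b c : ℂ) :
    ∃ u : ℂ, ‖u‖ = 1 ∧ ∃ γ : ℝ, u * b + star u * c = γ := by
  obtain ⟨u, hu, hreal⟩ := Complex.exists_norm_eq_mul_self (b - star c)
  refine ⟨u, hu, Complex.conj_eq_iff_real.1 ?_⟩
  have hconj := congrArg (starRingEnd ℂ) hreal
  rw [Complex.conj_ofReal, hreal] at hconj
  simp only [Complex.star_def, map_add, map_sub, map_mul, Complex.conj_conj] at hconj ⊢
  linear_combination -hconj

lemma exists_ne_zero_quadForm_eq_zero_of_eq_one_of_eq_neg_one {M : Matrix ι ι ℂ} {x y : ι → ℂ}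
    (hx : quadForm M x = 1) (hy : quadForm M y = -1) : ∃ z ≠ 0, quadForm M z = 0 := by
  obtain ⟨u, hu, γ, hγ⟩ :=
    exists_norm_eq_one_mul_add_star_mul_eq_ofReal (star x ⬝ᵥ M *ᵥ y) (star y ⬝ᵥ M *ᵥ x)
  set s : ℝ := (-γ + √(γ ^ 2 + 4)) / 2
  have hs : s ^ 2 + s * γ - 1 = 0 := by
    have := Real.sq_sqrt (show 0 ≤ γ ^ 2 + 4 by positivity)
    linear_combination this / 4
  refine ⟨(s : ℂ) • x + u • y, fun hz => ?_, ?_⟩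
  · have hsx : u • y = (-s : ℂ) • x := by
      rw [neg_smul, eq_neg_of_add_eq_zero_right hz]
    have hq := congrArg (quadForm M) hsx
    rw [quadForm_smul_right, quadForm_smul_right, hx, hy, hu, norm_neg, Complex.norm_real,
      Real.norm_eq_abs, sq_abs, one_pow, Complex.ofReal_one, one_mul, mul_one] at hq
    have hq_re : (-1 : ℝ) = s ^ 2 := by exact_mod_cast hq
    linarith [sq_nonneg s]
  · rw [quadForm_smul_add_smul, hγ, hu, hx, hy]
    have hs' : (s : ℂ) ^ 2 + s * γ - 1 = 0 := by exact_mod_cast hs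
    push_cast
    linear_combination hs'

lemma exists_ne_zero_quadForm_eq_zero_of_add_eq_zero {M : Matrix ι ι ℂ} {x y : ι → ℂ}
    (hx : x ≠ 0) (h : quadForm M x + quadForm M y = 0) : ∃ z ≠ 0, quadForm M z = 0 := by
  by_cases ha : quadForm M x = 0
  · exact ⟨x, hx, ha⟩
  obtain ⟨z, hz, hMz⟩ := exists_ne_zero_quadForm_eq_zero_of_eq_one_of_eq_neg_one
    (M := (quadForm M x)⁻¹ • M) (x := x) (y := y) (by rw [quadForm_smul_left, inv_mul_cancel₀ ha])
    (by rw [quadForm_smul_left, eq_neg_of_add_eq_zero_right h, mul_neg, inv_mul_cancel₀ ha])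
  rw [quadForm_smul_left] at hMz
  exact ⟨z, hz, (mul_eq_zero.1 hMz).resolve_left (inv_ne_zero ha)⟩

/-- The numerical range `{xᴴ M x | ‖x‖₂ = 1}`, with `‖x‖₂ = 1` encoded as in `IsSectorial`: a matrix
is sectorial when this set omits `0`. -/
def numericalRange (M : Matrix ι ι ℂ) : Set ℂ := quadForm M '' {x | star x ⬝ᵥ x = 1}

lemma ne_zero_of_star_dotProduct_self_eq_one {x : ι → ℂ} (hx : star x ⬝ᵥ x = 1) : x ≠ 0 := by
  rintro rfl
  simp at hx

lemma mem_numericalRange_iff [DecidableEq ι] {M : Matrix ι ι ℂ} {c : ℂ} :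
    c ∈ numericalRange M ↔ ∃ x ≠ 0, quadForm (M - c • 1) x = 0 := by
  constructor
  · rintro ⟨x, hx, rfl⟩
    have hx1 : star x ⬝ᵥ x = 1 := hx
    refine ⟨x, ne_zero_of_star_dotProduct_self_eq_one hx1, ?_⟩
    rw [quadForm_sub_smul_one, hx1, mul_one, sub_self]
  · rintro ⟨x, hx, hMx⟩
    obtain ⟨d, -, hd⟩ := exists_pos_star_dotProduct_smul_self_eq_one hx
    have hz := quadForm_smul_right (M - c • 1) (d : ℂ) x
    rw [hMx, mul_zero, quadForm_sub_smul_one, hd, mul_one, sub_eq_zero] at hz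
    exact ⟨(d : ℂ) • x, hd, hz⟩

lemma isCompact_numericalRange (M : Matrix ι ι ℂ) : IsCompact (numericalRange M) := by
  refine IsCompact.image ?_ (continuous_quadForm M)
  have hsphere : {x : ι → ℂ | star x ⬝ᵥ x = 1} =
      WithLp.ofLp '' Metric.sphere (0 : EuclideanSpace ℂ ι) 1 := by
    ext x
    rw [Set.mem_ofPred_eq, star_dotProduct_self_eq_norm_sq, Set.mem_image]
    norm_cast
    rw [pow_eq_one_iff_of_nonneg (norm_nonneg _) two_ne_zero]
    refine ⟨fun h => ⟨WithLp.toLp 2 x, by simpa using h, rfl⟩, ?_⟩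
    rintro ⟨y, hy, rfl⟩
    simpa using hy
  rw [hsphere]
  exact (isCompact_sphere 0 1).image (PiLp.continuous_ofLp 2 _)

/-- **Toeplitz–Hausdorff theorem**. -/
theorem convex_numericalRange (M : Matrix ι ι ℂ) : Convex ℝ (numericalRange M) := by
  refine convex_iff_forall_pos.2 ?_
  rintro _ ⟨x, hx, rfl⟩ _ ⟨y, hy, rfl⟩ s t hs ht hst
  have hx1 : star x ⬝ᵥ x = 1 := hx
  have hy1 : star y ⬝ᵥ y = 1 := hy
  have hst' : (s : ℂ) + t = 1 := by exact_mod_cast hst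
  refine mem_numericalRange_iff.2 (exists_ne_zero_quadForm_eq_zero_of_add_eq_zero
    (x := (√s : ℂ) • x) (y := (√t : ℂ) • y)
    (smul_ne_zero (by simpa using (Real.sqrt_pos.2 hs).ne')
      (ne_zero_of_star_dotProduct_self_eq_one hx1)) ?_)
  simp only [quadForm_smul_right, quadForm_sub_smul_one, hx1, hy1, Complex.norm_real,
    Real.norm_eq_abs, sq_abs, Real.sq_sqrt hs.le, Real.sq_sqrt ht.le, Complex.real_smul]
  linear_combination (-(s * quadForm M x) - t * quadForm M y) * hst'

lemma exists_re_mul_quadForm_pos {M : Matrix ι ι ℂ} (hM : 0 ∉ numericalRange M) :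
    ∃ w : ℂ, ∀ x ≠ 0, 0 < (w * quadForm M x).re := by
  obtain ⟨f, u, hu, hf⟩ := RCLike.geometric_hahn_banach_point_closed (𝕜 := ℂ)
    (convex_numericalRange M) (isCompact_numericalRange M).isClosed hM
  have hf_mul (z : ℂ) : f z = f 1 * z := by
    rw [mul_comm, ← smul_eq_mul, ← map_smul, smul_eq_mul, mul_one]
  rw [map_zero, map_zero] at hu
  refine ⟨f 1, fun x hx => ?_⟩
  obtain ⟨d, -, hd⟩ := exists_pos_star_dotProduct_smul_self_eq_one hx
  have hpos := hu.trans (hf _ ⟨_, hd, rfl⟩)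
  rw [hf_mul, quadForm_smul_right, mul_left_comm, RCLike.re_eq_complex_re,
    Complex.re_ofReal_mul] at hpos
  exact pos_of_mul_pos_right hpos (sq_nonneg _)

end QuadForm

section SimultaneousDiagonalization

variable {ι : Type*} [Fintype ι]

open scoped ComplexStarModule in
lemma posDef_realPart_of_re_quadForm_pos {C : Matrix ι ι ℂ}
    (hC : ∀ x ≠ 0, 0 < (quadForm C x).re) : (ℜ C : Matrix ι ι ℂ).PosDef := by
  have hre : (ℜ C : Matrix ι ι ℂ).IsHermitian := (ℜ C).2
  have him : (ℑ C : Matrix ι ι ℂ).IsHermitian := (ℑ C).2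
  refine PosDef.of_dotProduct_mulVec_pos hre fun {x} hx => ?_
  have hpos := hC x hx
  have him_zero := him.im_star_dotProduct_mulVec_self x
  rw [RCLike.im_eq_complex_im] at him_zero
  rw [quadForm, ← realPart_add_I_smul_imaginaryPart C, add_mulVec, smul_mulVec, dotProduct_add,
    dotProduct_smul, Complex.add_re, smul_eq_mul, Complex.I_mul_re, him_zero, neg_zero,
    add_zero] at hpos
  exact Complex.pos_iff.2 ⟨hpos, (hre.im_star_dotProduct_mulVec_self x).symm⟩

variable [DecidableEq ι] {𝕜 : Type*} [RCLike 𝕜]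

open scoped MatrixOrder in
lemma exists_isUnit_eq_conjTranspose_mul_self {H : Matrix ι ι 𝕜} (hH : H.PosDef) :
    ∃ S, IsUnit S ∧ H = Sᴴ * S := by
  obtain ⟨S, hS⟩ := CStarAlgebra.nonneg_iff_eq_star_mul_self.1 hH.posSemidef.nonneg
  refine ⟨S, (isUnit_iff_isUnit_det S).2 ?_, hS⟩
  have hdet := (isUnit_iff_isUnit_det H).1 hH.isUnit
  rw [hS, det_mul] at hdet
  exact isUnit_of_mul_isUnit_right hdet

lemma exists_isUnit_eq_conjTranspose_mul_diagonal_mul {H K : Matrix ι ι 𝕜} (hH : H.PosDef)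
    (hK : K.IsHermitian) :
    ∃ (T : Matrix ι ι 𝕜) (d : ι → ℝ), IsUnit T ∧ H = Tᴴ * T ∧
      K = Tᴴ * diagonal (fun i => (d i : 𝕜)) * T := by
  obtain ⟨S, hS, rfl⟩ := exists_isUnit_eq_conjTranspose_mul_self hH
  have hL : (S⁻¹ᴴ * K * S⁻¹).IsHermitian := isHermitian_conjTranspose_mul_mul S⁻¹ hK
  set U : Matrix ι ι 𝕜 := hL.eigenvectorUnitary.1
  set D : Matrix ι ι 𝕜 := diagonal fun i => (hL.eigenvalues i : 𝕜)
  have hU : U * Uᴴ = 1 := Unitary.coe_mul_star_self hL.eigenvectorUnitary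
  have hspec : S⁻¹ᴴ * K * S⁻¹ = U * D * Uᴴ := hL.spectral_theorem
  have hSS : S⁻¹ * S = 1 := nonsing_inv_mul S ((isUnit_iff_isUnit_det S).1 hS)
  have hSS' : Sᴴ * S⁻¹ᴴ = 1 := by rw [← conjTranspose_mul, hSS, conjTranspose_one]
  refine ⟨Uᴴ * S, hL.eigenvalues, (IsUnit.of_mul_eq_one _ hU).star.mul hS, ?_, ?_⟩
  · calc Sᴴ * S = Sᴴ * (U * Uᴴ) * S := by rw [hU, Matrix.mul_one]
      _ = (Uᴴ * S)ᴴ * (Uᴴ * S) := by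
        simp only [conjTranspose_mul, conjTranspose_conjTranspose, Matrix.mul_assoc]
  · calc K = Sᴴ * S⁻¹ᴴ * K * (S⁻¹ * S) := by rw [hSS, hSS', Matrix.one_mul, Matrix.mul_one]
      _ = Sᴴ * (S⁻¹ᴴ * K * S⁻¹) * S := by simp only [Matrix.mul_assoc]
      _ = (Uᴴ * S)ᴴ * D * (Uᴴ * S) := by
        simp only [hspec, conjTranspose_mul, conjTranspose_conjTranspose, Matrix.mul_assoc]

open scoped ComplexStarModule in
lemma exists_isUnit_eq_conjTranspose_mul_diagonal_mul_of_re_quadForm_pos {C : Matrix ι ι ℂ}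
    (hC : ∀ x ≠ 0, 0 < (quadForm C x).re) :
    ∃ (T : Matrix ι ι ℂ) (μ : ι → ℂ), IsUnit T ∧ (∀ i, 0 < (μ i).re) ∧
      C = Tᴴ * diagonal μ * T := by
  obtain ⟨T, d, hT, hre, him⟩ := exists_isUnit_eq_conjTranspose_mul_diagonal_mul
    (posDef_realPart_of_re_quadForm_pos hC) (K := (ℑ C : Matrix ι ι ℂ)) (ℑ C).2
  refine ⟨T, fun i => 1 + Complex.I * d i, hT, fun i => by simp, ?_⟩
  have hdiag : diagonal (fun i => 1 + Complex.I * (d i : ℂ)) =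
      1 + Complex.I • diagonal (fun i => (d i : ℂ)) := by
    rw [← diagonal_one, ← diagonal_smul, diagonal_add]
    rfl
  calc C = ℜ C + Complex.I • (ℑ C : Matrix ι ι ℂ) := (realPart_add_I_smul_imaginaryPart C).symm
    _ = Tᴴ * T + Complex.I • (Tᴴ * diagonal (fun i => (d i : ℂ)) * T) := by
      rw [hre, him]
      rfl
    _ = Tᴴ * diagonal (fun i => 1 + Complex.I * (d i : ℂ)) * T := by
      rw [hdiag, Matrix.mul_add, Matrix.add_mul, Matrix.mul_one, Matrix.mul_smul, Matrix.smul_mul]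

end SimultaneousDiagonalization

section Existence

lemma exists_isSectorialDecomp_of_eq_diagonal {A T : Matrix (Fin n) (Fin n) ℂ} {d : Fin n → ℂ}
    {φ : Fin n → ℝ} (hT : IsUnit T) (hA : A = Tᴴ * diagonal d * T) (hd : ∀ i, d i ≠ 0)
    (hφ : ∀ i, d i = ‖d i‖ * Complex.exp (Complex.I * φ i)) :
    ∃ S, IsSectorialDecomp A S φ := by
  set W : Matrix (Fin n) (Fin n) ℂ := diagonal fun i => (√‖d i‖ : ℂ)
  have hW : IsUnit W := isUnit_diagonal.2 <| Pi.isUnit_iff.2 fun i => isUnit_iff_ne_zero.2 <|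
    Complex.ofReal_ne_zero.2 (Real.sqrt_pos.2 (norm_pos_iff.2 (hd i))).ne'
  have hWd : Wᴴ * phaseDiag φ * W = diagonal d := by
    rw [phaseDiag, diagonal_conjTranspose, diagonal_mul_diagonal, diagonal_mul_diagonal]
    congr 1
    ext i
    rw [Pi.star_apply, Complex.star_def, Complex.conj_ofReal, mul_right_comm, ← Complex.ofReal_mul,
      Real.mul_self_sqrt (norm_nonneg _), ← hφ i]
  refine ⟨W * T, hW.mul hT, ?_⟩
  rw [hA, ← hWd, conjTranspose_mul]
  simp only [Matrix.mul_assoc]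

lemma IsSectorial.zero_notMem_numericalRange {A : Matrix (Fin n) (Fin n) ℂ}
    (hA : IsSectorial A) : 0 ∉ numericalRange A := by
  rintro ⟨x, hx, hAx⟩
  exact hA x hx hAx

/-- With `w` rotating the numerical range into the right half-plane, `w A` is congruent to a
diagonal matrix `μ` with entries there, and `A` has the phases `arg μ - arg w`. -/
theorem IsSectorial.exists_isSectorialDecomp {A : Matrix (Fin n) (Fin n) ℂ}
    (hA : IsSectorial A) :
    ∃ T φ, IsSectorialDecomp A T φ ∧ ∀ i j, φ i - φ j < Real.pi := by
  obtain ⟨w, hw⟩ := exists_re_mul_quadForm_pos hA.zero_notMem_numericalRange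
  rcases isEmpty_or_nonempty (Fin n) with _ | _
  · exact ⟨1, 0, ⟨isUnit_one, Subsingleton.elim _ _⟩, isEmptyElim⟩
  have hw0 : w ≠ 0 := by
    rintro rfl
    simpa using hw 1 one_ne_zero
  obtain ⟨T, μ, hT, hμ, hwA⟩ := exists_isUnit_eq_conjTranspose_mul_diagonal_mul_of_re_quadForm_pos
    (C := w • A) (fun x hx => by rw [quadForm_smul_left]; exact hw x hx)
  have hμ0 (i : Fin n) : μ i ≠ 0 := fun h => by simpa [h] using hμ i
  have hA_eq : A = Tᴴ * diagonal (w⁻¹ • μ) * T := by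
    rw [diagonal_smul, Matrix.mul_smul, Matrix.smul_mul, ← hwA, inv_smul_smul₀ hw0]
  have hpolar (i : Fin n) : (w⁻¹ • μ) i =
      ‖(w⁻¹ • μ) i‖ * Complex.exp (Complex.I * ((μ i).arg - w.arg : ℝ)) := by
    have hw_norm : (‖w‖ : ℂ) ≠ 0 := by simpa using hw0
    rw [Pi.smul_apply, smul_eq_mul, norm_mul, norm_inv, Complex.ofReal_sub, mul_sub,
      Complex.exp_sub, mul_comm Complex.I, mul_comm Complex.I]
    conv_lhs => rw [← Complex.norm_mul_exp_arg_mul_I (μ i), ← Complex.norm_mul_exp_arg_mul_I w]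
    push_cast
    field_simp
  obtain ⟨S, hS⟩ := exists_isSectorialDecomp_of_eq_diagonal hT hA_eq
    (fun i => mul_ne_zero (inv_ne_zero hw0) (hμ0 i)) hpolar
  refine ⟨S, _, hS, fun i j => ?_⟩
  have hi := abs_lt.1 (Complex.abs_arg_lt_pi_div_two_iff.2 (Or.inl (hμ i)))
  have hj := abs_lt.1 (Complex.abs_arg_lt_pi_div_two_iff.2 (Or.inl (hμ j)))
  linarith

end Existence

section Decompositions

variable {A B S T : Matrix (Fin n) (Fin n) ℂ} {φ ψ : Fin n → ℝ}

lemma exists_forall_abs_sub_lt_half {ι : Type*} [Finite ι] {f : ι → ℝ} {c : ℝ}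
    (hf : ∀ i j, f i - f j < c) : ∃ β, ∀ i, |f i - β| < c / 2 := by
  rcases isEmpty_or_nonempty ι with _ | _
  · exact ⟨0, isEmptyElim⟩
  obtain ⟨i, hi⟩ := Finite.exists_max f
  obtain ⟨j, hj⟩ := Finite.exists_min f
  refine ⟨(f i + f j) / 2, fun k => abs_lt.2 ⟨?_, ?_⟩⟩ <;> linarith [hi k, hj k, hf i j]

lemma IsSectorialDecomp.mulVec_ne_zero (h : IsSectorialDecomp A T φ) {x : Fin n → ℂ}
    (hx : x ≠ 0) : T *ᵥ x ≠ 0 := fun h0 =>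
  hx (mulVec_injective_iff_isUnit.2 h.1 (h0.trans (mulVec_zero T).symm))

lemma IsSectorialDecomp.quadForm_eq (h : IsSectorialDecomp A T φ) (x : Fin n → ℂ) :
    quadForm A x = ∑ j, (‖(T *ᵥ x) j‖ ^ 2 : ℝ) * Complex.exp (Complex.I * φ j) := by
  rw [h.2, quadForm_conjTranspose_mul_mul, phaseDiag, quadForm_diagonal]

lemma re_exp_neg_mul_exp (α β : ℝ) :
    (Complex.exp (-(Complex.I * α)) * Complex.exp (Complex.I * β)).re = Real.cos (β - α) := by
  rw [← Complex.exp_add, ← Complex.exp_ofReal_mul_I_re]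
  congr 2
  push_cast
  ring

lemma IsSectorialDecomp.re_exp_mul_quadForm_pos (h : IsSectorialDecomp A T φ) {x : Fin n → ℂ}
    (hx : x ≠ 0) {α : ℝ} (hα : ∀ j, (T *ᵥ x) j ≠ 0 → |φ j - α| < Real.pi / 2) :
    0 < (Complex.exp (-(Complex.I * α)) * quadForm A x).re := by
  have hterm (j : Fin n) (hj : (T *ᵥ x) j ≠ 0) :
      0 < ‖(T *ᵥ x) j‖ ^ 2 * Real.cos (φ j - α) :=
    mul_pos (by positivity) (Real.cos_pos_of_mem_Ioo (abs_lt.1 (hα j hj)))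
  rw [h.quadForm_eq, Finset.mul_sum, Complex.re_sum]
  simp only [mul_left_comm (Complex.exp _), Complex.re_ofReal_mul, re_exp_neg_mul_exp]
  obtain ⟨i, hi⟩ := Function.ne_iff.1 (h.mulVec_ne_zero hx)
  refine Finset.sum_pos' (fun j _ => ?_) ⟨i, Finset.mem_univ _, hterm i hi⟩
  by_cases hj : (T *ᵥ x) j = 0
  · simp [hj]
  · exact (hterm j hj).le

lemma IsSectorialDecomp.isSectorial (h : IsSectorialDecomp A T φ)
    (hφ : ∀ i j, φ i - φ j < Real.pi) : IsSectorial A := by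
  obtain ⟨β, hβ⟩ := exists_forall_abs_sub_lt_half hφ
  intro x hx hAx
  have hpos := h.re_exp_mul_quadForm_pos (ne_zero_of_star_dotProduct_self_eq_one hx)
    fun j _ => hβ j
  rw [quadForm, hAx, mul_zero, Complex.zero_re] at hpos
  exact hpos.false

lemma IsSectorialDecomp.exists_quadForm_eq_exp (h : IsSectorialDecomp A T φ) (i : Fin n) :
    ∃ x ≠ 0, quadForm A x = Complex.exp (Complex.I * φ i) := by
  obtain ⟨x, hx⟩ := mulVec_surjective_iff_isUnit.2 h.1 (Pi.single i 1)
  refine ⟨x, ?_, ?_⟩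
  · rintro rfl
    rw [mulVec_zero] at hx
    exact one_ne_zero (Pi.single_eq_zero_iff.1 hx.symm)
  · rw [h.quadForm_eq, hx, Finset.sum_eq_single i (fun j _ hj => by simp [hj]) (by simp)]
    simp

lemma exists_ne_zero_forall_apply_eq_zero {K ι κ V : Type*} [Field K] [AddCommGroup V]
    [Module K V] (P : V →ₗ[K] ι → K) (Q : V →ₗ[K] κ → K) {I : Finset ι} {J : Finset κ}
    (h : I.card + J.card < Module.finrank K V) :
    ∃ v ≠ 0, (∀ i ∈ I, P v i = 0) ∧ ∀ j ∈ J, Q v j = 0 := by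
  have hV : FiniteDimensional K V := FiniteDimensional.of_finrank_pos (pos_of_gt h)
  let L : V →ₗ[K] (I → K) × (J → K) :=
    (LinearMap.funLeft K K (↑) ∘ₗ P).prod (LinearMap.funLeft K K (↑) ∘ₗ Q)
  have hL : LinearMap.ker L ≠ ⊥ := LinearMap.ker_ne_bot_of_finrank_lt (by simpa using h)
  obtain ⟨v, hv, hv0⟩ := (Submodule.ne_bot_iff _).1 hL
  exact ⟨v, hv0, fun i hi => congrFun (congrArg Prod.fst hv) ⟨i, hi⟩,
    fun j hj => congrFun (congrArg Prod.snd hv) ⟨j, hj⟩⟩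

/-- Courant–Fischer for phases: if `φ k < ψ k'`, a dimension count gives `v ≠ 0` involving only
phases at most `φ k` of `A` and at least `ψ k'` of `B`, which puts `quadForm A (P v)` and
`quadForm B (Q v)` on opposite sides of a line through `0`. -/
lemma phase_le_phase_of_quadForm_eq {V : Type*} [AddCommGroup V] [Module ℂ V]
    {P Q : V →ₗ[ℂ] Fin n → ℂ} (hP : Function.Injective P) (hQ : Function.Injective Q)
    (hPQ : ∀ v, quadForm A (P v) = quadForm B (Q v))
    (hA : IsSectorialDecomp A S φ) (hB : IsSectorialDecomp B T ψ)
    (hφ : Antitone φ) (hψ : Antitone ψ) {a : ℝ}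
    (hφa : ∀ i, φ i ∈ Set.Ioc a (a + Real.pi)) (hψa : ∀ i, ψ i ∈ Set.Ioc a (a + Real.pi))
    {r : ℕ} (hr : n ≤ Module.finrank ℂ V + r) {k k' : Fin n} (hk : (k' : ℕ) = k + r) :
    ψ k' ≤ φ k := by
  by_contra! hlt
  obtain ⟨v, hv0, hSv, hTv⟩ := exists_ne_zero_forall_apply_eq_zero (S.mulVecLin ∘ₗ P)
    (T.mulVecLin ∘ₗ Q) (I := Finset.Iio k) (J := Finset.Ioi k') (by
      rw [Fin.card_Iio, Fin.card_Ioi]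
      lia)
  have hS_supp (j : Fin n) (hj : (S *ᵥ P v) j ≠ 0) : k ≤ j :=
    not_lt.1 fun hjk => hj (hSv j (Finset.mem_Iio.2 hjk))
  have hT_supp (j : Fin n) (hj : (T *ᵥ Q v) j ≠ 0) : j ≤ k' :=
    not_lt.1 fun hjk => hj (hTv j (Finset.mem_Ioi.2 hjk))
  set m := (φ k + ψ k') / 2 with hm
  have hA_pos := hA.re_exp_mul_quadForm_pos ((map_ne_zero_iff P hP).2 hv0) (α := m - Real.pi / 2)
    fun j hj => by
      have := hφ (hS_supp j hj)
      exact abs_lt.2 ⟨by linarith [(hφa j).1, (hψa k').2], by linarith⟩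
  have hB_pos := hB.re_exp_mul_quadForm_pos ((map_ne_zero_iff Q hQ).2 hv0) (α := m + Real.pi / 2)
    fun j hj => by
      have := hψ (hT_supp j hj)
      exact abs_lt.2 ⟨by linarith, by linarith [(hφa k).1, (hψa j).2]⟩
  have hexp : Complex.exp (-(Complex.I * (m + Real.pi / 2 : ℝ))) =
      -Complex.exp (-(Complex.I * (m - Real.pi / 2 : ℝ))) := by
    rw [← Complex.exp_sub_pi_mul_I]
    congr 1
    push_cast
    ring
  rw [hPQ] at hA_pos
  rw [hexp, neg_mul, Complex.neg_re] at hB_pos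
  linarith

lemma IsSectorialDecomp.eq_of_mem_Ioc (hS : IsSectorialDecomp A S φ)
    (hT : IsSectorialDecomp A T ψ) (hφ : Antitone φ) (hψ : Antitone ψ) {a : ℝ}
    (hφa : ∀ i, φ i ∈ Set.Ioc a (a + Real.pi)) (hψa : ∀ i, ψ i ∈ Set.Ioc a (a + Real.pi)) :
    φ = ψ := by
  have hid : Function.Injective (LinearMap.id : (Fin n → ℂ) →ₗ[ℂ] Fin n → ℂ) :=
    Function.injective_id
  have hn : n ≤ Module.finrank ℂ (Fin n → ℂ) + 0 := by simp
  ext k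
  exact le_antisymm
    (phase_le_phase_of_quadForm_eq hid hid (fun _ => rfl) hT hS hψ hφ hψa hφa hn rfl)
    (phase_le_phase_of_quadForm_eq hid hid (fun _ => rfl) hS hT hφ hψ hφa hψa hn rfl)

lemma IsSectorialDecomp.exists_comp_perm (h : IsSectorialDecomp A T φ)
    (σ : Equiv.Perm (Fin n)) : ∃ S, IsSectorialDecomp A S (φ ∘ σ) := by
  refine ⟨T.submatrix σ (Equiv.refl _), (isUnit_submatrix_equiv σ (Equiv.refl _)).2 h.1, ?_⟩
  have hD : phaseDiag (φ ∘ σ) = (phaseDiag φ).submatrix σ σ :=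
    (submatrix_diagonal_equiv (fun k => Complex.exp (Complex.I * φ k)) σ).symm
  rw [hD, conjTranspose_submatrix, submatrix_mul_equiv, submatrix_mul_equiv, ← h.2]
  rfl

lemma phaseDiag_add_int_mul_two_pi (φ : Fin n → ℝ) (m : ℤ) :
    phaseDiag (fun i => φ i + m * (2 * Real.pi)) = phaseDiag φ := by
  rw [phaseDiag, phaseDiag]
  congr 1
  ext i
  rw [← (Complex.exp_periodic.int_mul m) (Complex.I * φ i)]
  congr 1
  push_cast
  ring

lemma IsSectorialDecomp.add_int_mul_two_pi (h : IsSectorialDecomp A T φ) (m : ℤ) :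
    IsSectorialDecomp A T fun i => φ i + m * (2 * Real.pi) :=
  ⟨h.1, by rw [phaseDiag_add_int_mul_two_pi]; exact h.2⟩

lemma abs_lt_pi_div_two_of_cos_pos {x : ℝ} (hx : |x| ≤ 3 * Real.pi / 2) (hcos : 0 < Real.cos x) :
    |x| < Real.pi / 2 := by
  by_contra! h
  rw [← Real.cos_abs] at hcos
  exact hcos.not_ge (Real.cos_nonpos_of_pi_div_two_le_of_le h (by linarith))

lemma IsSectorialDecomp.exists_eq_add_int_mul_two_pi (hS : IsSectorialDecomp A S φ)
    (hT : IsSectorialDecomp A T ψ) (hφ : Antitone φ) (hψ : Antitone ψ)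
    (hφ_spread : ∀ i j, φ i - φ j < Real.pi) (hψ_spread : ∀ i j, ψ i - ψ j < Real.pi) :
    ∃ m : ℤ, φ = fun i => ψ i + m * (2 * Real.pi) := by
  rcases isEmpty_or_nonempty (Fin n) with _ | ⟨⟨i₀⟩⟩
  · exact ⟨0, Subsingleton.elim _ _⟩
  obtain ⟨β, hβ⟩ := exists_forall_abs_sub_lt_half hφ_spread
  have hcos (i : Fin n) : 0 < Real.cos (ψ i - β) := by
    obtain ⟨x, hx, hAx⟩ := hT.exists_quadForm_eq_exp i
    rw [← re_exp_neg_mul_exp, ← hAx]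
    exact hS.re_exp_mul_quadForm_pos hx fun j _ => hβ j
  obtain ⟨m, ⟨hm₁, hm₂⟩, -⟩ :=
    existsUnique_add_zsmul_mem_Ioc Real.two_pi_pos (ψ i₀) (β - Real.pi)
  rw [zsmul_eq_mul] at hm₁ hm₂
  have hcos_shift (i : Fin n) : 0 < Real.cos (ψ i + m * (2 * Real.pi) - β) := by
    rw [add_sub_right_comm, Real.cos_add_int_mul_two_pi]
    exact hcos i
  have hi₀ := abs_lt.1 <| abs_lt_pi_div_two_of_cos_pos
    (abs_le.2 ⟨by linarith [Real.pi_pos], by linarith [Real.pi_pos]⟩) (hcos_shift i₀)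
  have hψβ (i : Fin n) : |ψ i + m * (2 * Real.pi) - β| < Real.pi / 2 :=
    abs_lt_pi_div_two_of_cos_pos (abs_le.2 ⟨by linarith [hψ_spread i₀ i],
      by linarith [hψ_spread i i₀]⟩) (hcos_shift i)
  refine ⟨m, hS.eq_of_mem_Ioc (hT.add_int_mul_two_pi m) hφ (fun i j hij => ?_)
    (a := β - Real.pi / 2) (fun i => ?_) (fun i => ?_)⟩
  · exact add_le_add_left (hψ hij) _
  · constructor <;> linarith [abs_lt.1 (hβ i)]
  · constructor <;> linarith [abs_lt.1 (hψβ i)]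

end Decompositions

section Midrange

variable {ι : Type*} {f : ι → ℝ}

/-- The midpoint of the range of a finite family. A sorted phase vector of spread less than `π` is
canonical exactly when its midrange lies in `(-π, π]`. -/
def midrange (f : ι → ℝ) : ℝ := ((⨆ i, f i) + ⨅ i, f i) / 2

lemma midrange_comp_equiv {κ : Type*} (f : ι → ℝ) (σ : κ ≃ ι) :
    midrange (f ∘ σ) = midrange f := by
  rw [midrange, midrange, ← σ.iSup_comp, ← σ.iInf_comp]
  rfl

lemma midrange_neg (f : ι → ℝ) : midrange (fun i => -f i) = -midrange f := by
  have hrange : Set.range (fun i => -f i) = -Set.range f := by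
    ext x
    simp [neg_eq_iff_eq_neg]
  rw [midrange, midrange, iSup, iInf, hrange, Real.sSup_neg, Real.sInf_neg, iSup, iInf]
  ring

variable [Nonempty ι] [Finite ι]

lemma midrange_add_const (f : ι → ℝ) (c : ℝ) : midrange (fun i => f i + c) = midrange f + c := by
  rw [midrange, midrange, ← ciSup_add (Set.finite_range f).bddAbove,
    ← ciInf_add (Set.finite_range f).bddBelow]
  ring

lemma midrange_mem {s : Set ℝ} (hs : s.OrdConnected) (hf : ∀ i, f i ∈ s) : midrange f ∈ s := by
  obtain ⟨i, hi⟩ := exists_eq_ciSup_of_finite (f := f)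
  obtain ⟨j, hj⟩ := exists_eq_ciInf_of_finite (f := f)
  have hji : f j ≤ f i := hi ▸ le_ciSup (Set.finite_range f).bddAbove j
  rw [midrange, ← hi, ← hj]
  exact hs.out (hf j) (hf i) ⟨by linarith, by linarith⟩

end Midrange

section CanonicalPhases

variable {A T : Matrix (Fin n) (Fin n) ℂ} {φ ψ : Fin n → ℝ}

lemma IsCanonicalPhases.eq (hφ : IsCanonicalPhases A φ) (hψ : IsCanonicalPhases A ψ) :
    φ = ψ := by
  rcases isEmpty_or_nonempty (Fin n) with _ | _
  · exact Subsingleton.elim _ _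
  obtain ⟨hφ_anti, hφ_spread, hφ_lb, hφ_ub, S, hS⟩ := hφ
  obtain ⟨hψ_anti, hψ_spread, hψ_lb, hψ_ub, T, hT⟩ := hψ
  obtain ⟨m, rfl⟩ := hS.exists_eq_add_int_mul_two_pi hT hφ_anti hψ_anti hφ_spread hψ_spread
  have hmid := midrange_add_const ψ (m * (2 * Real.pi))
  rw [midrange, midrange] at hmid
  have hm_lt : (m : ℝ) < 1 := lt_of_mul_lt_mul_right (by linarith) Real.two_pi_pos.le
  have hm_gt : (-1 : ℝ) < m := lt_of_mul_lt_mul_right (by linarith) Real.two_pi_pos.le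
  obtain rfl : m = 0 := by
    have : m < 1 := by exact_mod_cast hm_lt
    have : -1 < m := by exact_mod_cast hm_gt
    lia
  simp

lemma IsCanonicalPhases.phases_eq (h : IsCanonicalPhases A φ) : phases A = φ := by
  have hex : ∃ φ, IsCanonicalPhases A φ := ⟨φ, h⟩
  rw [phases, dif_pos hex]
  exact hex.choose_spec.eq h

lemma IsSectorialDecomp.exists_isCanonicalPhases_comp_perm (h : IsSectorialDecomp A T φ)
    (hspread : ∀ i j, φ i - φ j < Real.pi) (hmid : midrange φ ∈ Set.Ioc (-Real.pi) Real.pi) :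
    ∃ σ : Equiv.Perm (Fin n), IsCanonicalPhases A (φ ∘ σ) := by
  set σ := Tuple.sort (OrderDual.toDual ∘ φ)
  rw [← midrange_comp_equiv φ σ] at hmid
  exact ⟨σ, monotone_toDual_comp_iff.1 (Tuple.monotone_sort (OrderDual.toDual ∘ φ)),
    fun i j => hspread _ _, hmid.1, hmid.2, h.exists_comp_perm σ⟩

lemma IsSectorialDecomp.exists_phases_eq_comp_perm (h : IsSectorialDecomp A T φ)
    (hspread : ∀ i j, φ i - φ j < Real.pi) (hmid : midrange φ ∈ Set.Ioc (-Real.pi) Real.pi) :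
    ∃ σ : Equiv.Perm (Fin n), phases A = φ ∘ σ :=
  (h.exists_isCanonicalPhases_comp_perm hspread hmid).imp fun _ hσ => hσ.phases_eq

variable [NeZero n]

lemma IsSectorial.isCanonicalPhases_phases (hA : IsSectorial A) :
    IsCanonicalPhases A (phases A) := by
  obtain ⟨T, φ, hT, hspread⟩ := hA.exists_isSectorialDecomp
  obtain ⟨m, hm, -⟩ := existsUnique_add_zsmul_mem_Ioc Real.two_pi_pos (midrange φ) (-Real.pi)
  rw [zsmul_eq_mul, show -Real.pi + 2 * Real.pi = Real.pi by ring] at hm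
  obtain ⟨σ, hσ⟩ := (hT.add_int_mul_two_pi m).exists_isCanonicalPhases_comp_perm
    (fun i j => by linarith [hspread i j]) (by rwa [midrange_add_const])
  rwa [hσ.phases_eq]

end CanonicalPhases

section Gauge

variable {Φ : (Fin n → ℝ) → ℝ} {x y : Fin n → ℝ}

lemma IsSymmetricGauge.convexOn (hΦ : IsSymmetricGauge Φ) : ConvexOn ℝ Set.univ Φ := by
  refine ⟨convex_univ, fun u _ v _ a b ha hb _ => (hΦ.subadd _ _).trans_eq ?_⟩
  rw [hΦ.smul, hΦ.smul, abs_of_nonneg ha, abs_of_nonneg hb, smul_eq_mul, smul_eq_mul]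

/-- `x` lies in the box with vertices `(±|y k|)ₖ`, on which the convex function `Φ` attains its
maximum at a vertex, and `Φ` equals `Φ y` at every vertex. -/
lemma IsSymmetricGauge.mono (hΦ : IsSymmetricGauge Φ) (h : ∀ k, |x k| ≤ |y k|) : Φ x ≤ Φ y := by
  have hbox : x ∈ convexHull ℝ (Set.univ.pi fun k => ({-|y k|, |y k|} : Set ℝ)) := by
    refine mem_convexHull_pi fun k _ => ?_
    rw [convexHull_pair, segment_eq_Icc (neg_le_self (abs_nonneg _))]
    exact abs_le.1 (h k)
  obtain ⟨z, hz, hxz⟩ := hΦ.convexOn.exists_ge_of_mem_convexHull (Set.subset_univ _) hbox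
  have habs : (fun k => |z k|) = fun k => |y k| := by
    ext k
    rcases hz k (Set.mem_univ k) with hk | hk
    · rw [hk, abs_neg, abs_abs]
    · rw [Set.mem_singleton_iff.1 hk, abs_abs]
  rwa [← hΦ.abs z, habs, hΦ.abs] at hxz

lemma IsSymmetricGauge.truncation_le_of_shift [NeZero n] (hΦ : IsSymmetricGauge Φ) {r : ℕ}
    (h : ∀ k k' : Fin n, (k' : ℕ) = k + r → |x k| ≤ |y k'|) :
    Φ (fun k => if (k : ℕ) < n - r then x k else 0) ≤ Φ y := by
  rw [← hΦ.perm (Equiv.addRight (Fin.ofNat n r)) y]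
  refine hΦ.mono fun k => ?_
  split_ifs with hk
  · refine h k _ ?_
    rw [Equiv.coe_addRight, Fin.val_add, Fin.val_ofNat, Nat.add_mod_mod,
      Nat.mod_eq_of_lt (by lia)]
  · rw [abs_zero]
    exact abs_nonneg _

lemma IsSymmetricGauge.truncation_rev (hΦ : IsSymmetricGauge Φ) (x : Fin n → ℝ) (r : ℕ) :
    Φ (fun k => if (k : ℕ) < r then 0 else x k.rev) =
      Φ fun k => if (k : ℕ) < n - r then x k else 0 := by
  rw [← hΦ.perm Fin.revPerm]
  congr 1
  ext k
  have hk : (k.rev : ℕ) < r ↔ ¬ (k : ℕ) < n - r := by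
    rw [Fin.val_rev]
    lia
  simp only [Function.comp_apply, Fin.revPerm_apply, Fin.rev_rev, hk, ite_not]

end Gauge

section Algebra

variable {A B F T : Matrix (Fin n) (Fin n) ℂ} {φ ψ : Fin n → ℝ}

lemma phaseDiag_zero : phaseDiag (0 : Fin n → ℝ) = 1 := by
  simp [phaseDiag]

lemma phaseDiag_add (φ ψ : Fin n → ℝ) : phaseDiag (φ + ψ) = phaseDiag φ * phaseDiag ψ := by
  rw [phaseDiag, phaseDiag, phaseDiag, diagonal_mul_diagonal]
  congr 1
  ext i
  rw [← Complex.exp_add, Pi.add_apply, Complex.ofReal_add, mul_add]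

lemma phaseDiag_mul_neg (φ : Fin n → ℝ) : phaseDiag φ * phaseDiag (-φ) = 1 := by
  rw [← phaseDiag_add, add_neg_cancel, phaseDiag_zero]

lemma conjTranspose_phaseDiag (φ : Fin n → ℝ) : (phaseDiag φ)ᴴ = phaseDiag (-φ) := by
  rw [phaseDiag, phaseDiag, diagonal_conjTranspose]
  congr 1
  ext i
  rw [Pi.star_apply, Complex.star_def, ← Complex.exp_conj]
  simp

lemma IsSectorialDecomp.isUnit (h : IsSectorialDecomp A T φ) : IsUnit A := by
  rw [h.2]
  exact (((isUnit_conjTranspose T).2 h.1).mul (.of_mul_eq_one _ (phaseDiag_mul_neg φ))).mul h.1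

lemma IsSectorialDecomp.inv (h : IsSectorialDecomp A T φ) :
    IsSectorialDecomp A⁻¹ T⁻¹ᴴ (-φ) := by
  refine ⟨(isUnit_conjTranspose _).2 (isUnit_nonsing_inv_iff.2 h.1), ?_⟩
  have hD : (phaseDiag φ)⁻¹ = phaseDiag (-φ) := inv_eq_right_inv (phaseDiag_mul_neg φ)
  rw [h.2, Matrix.mul_inv_rev, Matrix.mul_inv_rev, hD, conjTranspose_conjTranspose,
    conjTranspose_nonsing_inv, Matrix.mul_assoc]

lemma IsSectorialDecomp.mul_inv_mul (hF : IsSectorialDecomp F T φ)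
    (hB : IsSectorialDecomp B T ψ) : IsSectorialDecomp (F * B⁻¹ * F) T (φ - ψ + φ) := by
  have hT : T * T⁻¹ = 1 := mul_nonsing_inv T ((isUnit_iff_isUnit_det T).1 hF.1)
  have hT' : T⁻¹ᴴ * Tᴴ = 1 := by rw [← conjTranspose_mul, hT, conjTranspose_one]
  refine ⟨hF.1, ?_⟩
  calc F * B⁻¹ * F
      = Tᴴ * phaseDiag φ * T * (T⁻¹ᴴᴴ * phaseDiag (-ψ) * T⁻¹ᴴ) * (Tᴴ * phaseDiag φ * T) := by
        rw [hB.inv.2, ← hF.2]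
    _ = Tᴴ * phaseDiag φ * (T * T⁻¹) * phaseDiag (-ψ) * (T⁻¹ᴴ * Tᴴ) * phaseDiag φ * T := by
        rw [conjTranspose_conjTranspose]
        simp only [Matrix.mul_assoc]
    _ = Tᴴ * phaseDiag (φ - ψ + φ) * T := by
        rw [hT, hT', Matrix.mul_one, Matrix.mul_one, phaseDiag_add, sub_eq_add_neg, phaseDiag_add]
        simp only [Matrix.mul_assoc]

lemma IsSectorial.isUnit (hA : IsSectorial A) : IsUnit A := by
  obtain ⟨T, φ, hT, -⟩ := hA.exists_isSectorialDecomp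
  exact hT.isUnit

lemma IsCanonicalPhases.inv (h : IsCanonicalPhases A φ) (hmid : midrange φ < Real.pi) :
    IsCanonicalPhases A⁻¹ fun k => -φ k.rev := by
  obtain ⟨hanti, hspread, hlb, -, T, hT⟩ := h
  have hneg : midrange (fun k : Fin n => -φ k.rev) = -midrange φ := by
    rw [midrange_neg (fun k : Fin n => φ k.rev)]
    exact congrArg Neg.neg (midrange_comp_equiv φ Fin.revPerm)
  rw [← midrange] at hlb
  refine ⟨fun i j hij => neg_le_neg (hanti (Fin.rev_le_rev.2 hij)),
    fun i j => by linarith [hspread j.rev i.rev], ?_, ?_, hT.inv.exists_comp_perm Fin.revPerm⟩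
  · rw [← midrange, hneg]
    linarith
  · rw [← midrange, hneg]
    linarith

end Algebra

section NegativeImaginary

variable {A T : Matrix (Fin n) (Fin n) ℂ} {φ : Fin n → ℝ} [NeZero n]

lemma IsSectorialDecomp.exists_phases_eq_comp_perm_of_mem_Ioc (h : IsSectorialDecomp A T φ)
    (hφ : ∀ i, φ i ∈ Set.Ioc (-Real.pi) 0) : ∃ σ : Equiv.Perm (Fin n), phases A = φ ∘ σ := by
  refine h.exists_phases_eq_comp_perm (fun i j => by linarith [(hφ i).2, (hφ j).1])
    (midrange_mem Set.ordConnected_Ioc fun i => ⟨(hφ i).1, (hφ i).2.trans Real.pi_pos.le⟩)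

lemma IsSectorialDecomp.negativeImaginary (h : IsSectorialDecomp A T φ)
    (hφ : ∀ i, φ i ∈ Set.Ioc (-Real.pi) 0) : NegativeImaginary A := by
  obtain ⟨σ, hσ⟩ := h.exists_phases_eq_comp_perm_of_mem_Ioc hφ
  refine ⟨h.isSectorial fun i j => by linarith [(hφ i).2, (hφ j).1], fun k => ?_⟩
  rw [hσ]
  exact hφ _

lemma NegativeImaginary.phases_inv (hA : NegativeImaginary A) :
    phases A⁻¹ = fun k => -phases A k.rev :=
  (hA.1.isCanonicalPhases_phases.inv <|
    (midrange_mem Set.ordConnected_Iic fun i => (hA.2 i).2).trans_lt Real.pi_pos).phases_eq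

lemma NegativeImaginary.isSectorial_inv (hA : NegativeImaginary A) : IsSectorial A⁻¹ := by
  obtain ⟨-, hspread, -, -, T, hT⟩ := hA.1.isCanonicalPhases_phases
  exact hT.inv.isSectorial fun i j => by simpa [neg_add_eq_sub] using hspread j i

end NegativeImaginary

section LowerBound

variable {A E : Matrix (Fin n) (Fin n) ℂ} {r : ℕ}

/-- In a sectorial decomposition of `E`, a zero phase contributes a zero diagonal entry to
`E - Eᴴ`. -/
lemma IsSectorial.rank_sub_conjTranspose_le_prank [NeZero n] (hE : IsSectorial E) :
    (E - Eᴴ).rank ≤ prank E := by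
  obtain ⟨-, -, -, -, T, -, hT⟩ := hE.isCanonicalPhases_phases
  set d : Fin n → ℂ := fun k =>
    Complex.exp (Complex.I * phases E k) - Complex.exp (Complex.I * (-phases E) k)
  have hsub : E - Eᴴ = Tᴴ * diagonal d * T := by
    have hd : diagonal d = phaseDiag (phases E) - (phaseDiag (phases E))ᴴ := by
      rw [conjTranspose_phaseDiag, phaseDiag, phaseDiag, diagonal_sub]
    have hEH : Eᴴ = Tᴴ * (phaseDiag (phases E))ᴴ * T := by
      conv_lhs => rw [hT]
      rw [conjTranspose_mul, conjTranspose_mul, conjTranspose_conjTranspose, Matrix.mul_assoc]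
    rw [hd, Matrix.mul_sub, Matrix.sub_mul, ← hT, ← hEH]
  calc (E - Eᴴ).rank ≤ (diagonal d).rank := by
        rw [hsub]
        exact (rank_mul_le_left _ _).trans (rank_mul_le_right _ _)
    _ = {k | d k ≠ 0}.ncard := by
        rw [rank_diagonal, ← Nat.card_eq_fintype_card]
        rfl
    _ ≤ prank E := Set.ncard_le_ncard (fun k hk hk0 => hk (by simp [d, hk0]))

lemma quadForm_inv_mul_mul_inv_mulVec (hE : IsUnit E) {x : Fin n → ℂ} (hx : E *ᵥ x = Eᴴ *ᵥ x) :
    quadForm (E⁻¹ * A * E⁻¹) (E *ᵥ x) = quadForm A x := by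
  have hdet := (isUnit_iff_isUnit_det E).1 hE
  rw [quadForm, mulVec_mulVec, nonsing_inv_mul_cancel_right _ _ hdet, hx, star_mulVec,
    conjTranspose_conjTranspose, ← dotProduct_mulVec, mulVec_mulVec,
    mul_nonsing_inv_cancel_left _ _ hdet, quadForm]

lemma phases_inv_mul_mul_inv_le [NeZero n] (hA : NegativeImaginary A) (hE : IsUnit E)
    (hB : NegativeImaginary (E⁻¹ * A * E⁻¹)) (hr : (E - Eᴴ).rank ≤ r) {k k' : Fin n}
    (hk : (k' : ℕ) = k + r) : phases (E⁻¹ * A * E⁻¹) k' ≤ phases A k := by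
  obtain ⟨hA_anti, -, -, -, S, hS⟩ := hA.1.isCanonicalPhases_phases
  obtain ⟨hB_anti, -, -, -, T, hT⟩ := hB.1.isCanonicalPhases_phases
  set V := LinearMap.ker (E - Eᴴ).mulVecLin
  have hV (v : V) : E *ᵥ v = Eᴴ *ᵥ v := by
    have hv := LinearMap.mem_ker.1 v.2
    rwa [mulVecLin_apply, sub_mulVec, sub_eq_zero] at hv
  have hdim : n ≤ Module.finrank ℂ V + r := by
    have hrank : (E - Eᴴ).rank + Module.finrank ℂ V = n :=
      (LinearMap.finrank_range_add_finrank_ker _).trans (Module.finrank_fin_fun ℂ)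
    lia
  refine phase_le_phase_of_quadForm_eq (P := V.subtype) (Q := E.mulVecLin ∘ₗ V.subtype)
    V.injective_subtype ((mulVec_injective_iff_isUnit.2 hE).comp V.injective_subtype)
    (fun v => (quadForm_inv_mul_mul_inv_mulVec hE (hV v)).symm) hS hT hA_anti hB_anti
    (a := -Real.pi) ?_ ?_ hdim hk
  · simpa only [neg_add_cancel] using hA.2
  · simpa only [neg_add_cancel] using hB.2

lemma gauge_truncation_phases_le [NeZero n] {Φ : (Fin n → ℝ) → ℝ} (hΦ : IsSymmetricGauge Φ)
    (hA : NegativeImaginary A) (hE : IsSectorial E) (hEr : prank E ≤ r)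
    (hB : NegativeImaginary (E⁻¹ * A * E⁻¹)) :
    Φ (fun k => if (k : ℕ) < n - r then phases A k else 0) ≤ Φ (phases (E⁻¹ * A * E⁻¹)) :=
  hΦ.truncation_le_of_shift fun k _ hk => abs_le_abs_of_nonpos (hA.2 k).2 <|
    phases_inv_mul_mul_inv_le hA hE.isUnit hB (hE.rank_sub_conjTranspose_le_prank.trans hEr) hk

end LowerBound

section Attainment

variable {A E : Matrix (Fin n) (Fin n) ℂ} {r : ℕ}

/-- The angles of the elements of `Sp A r`: the first `r` phases halved, the others set to `0`. -/
def halfTruncation (φ : Fin n → ℝ) (r : ℕ) (k : Fin n) : ℝ := if (k : ℕ) < r then φ k / 2 else 0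

lemma mem_Sp_iff : E ∈ Sp A r ↔ ∃ T, IsSectorialDecomp A T (phases A) ∧
    IsSectorialDecomp E T (halfTruncation (phases A) r) := by
  have hdiag : phaseDiag (halfTruncation (phases A) r) = diagonal fun k : Fin n =>
      if (k : ℕ) < r then Complex.exp (Complex.I * ((phases A k / 2 : ℝ) : ℂ)) else 1 := by
    rw [phaseDiag]
    congr 1
    ext k
    rw [halfTruncation]
    split_ifs <;> simp
  refine exists_congr fun T => and_congr_right fun hT => ?_
  rw [IsSectorialDecomp, hdiag, and_iff_right hT.1]

lemma exists_mem_Sp [NeZero n] (hA : IsSectorial A) (r : ℕ) : ∃ E ∈ Sp A r, IsUnit E := by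
  obtain ⟨-, -, -, -, T, hT⟩ := hA.isCanonicalPhases_phases
  have hE : IsSectorialDecomp (Tᴴ * phaseDiag (halfTruncation (phases A) r) * T) T
    (halfTruncation (phases A) r) := ⟨hT.1, rfl⟩
  exact ⟨_, mem_Sp_iff.2 ⟨T, hT, hE⟩, hE.isUnit⟩

lemma prank_le_of_phases_eq_comp_perm {φ : Fin n → ℝ} {σ : Equiv.Perm (Fin n)}
    (h : phases E = φ ∘ σ) (hφ : ∀ k : Fin n, r ≤ k → φ k = 0) : prank E ≤ r := by
  calc prank E ≤ (Set.Iio r).ncard := by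
        refine Set.ncard_le_ncard_of_injOn (fun k => (σ k : ℕ)) (fun k hk => ?_)
          (fun _ _ _ _ hij => σ.injective (Fin.ext hij)) (Set.finite_Iio r)
        rw [Set.mem_ofPred_eq, h] at hk
        exact not_le.1 fun hr => hk (hφ _ hr)
    _ = r := Set.ncard_Iio_nat r

lemma NegativeImaginary.exists_isSectorialDecomp_of_inv_mem_Sp [NeZero n]
    (hA : NegativeImaginary A) (hE : E⁻¹ ∈ Sp A⁻¹ r) :
    ∃ S T, IsSectorialDecomp E S (halfTruncation (fun k => phases A k.rev) r) ∧
      IsSectorialDecomp (E⁻¹ * A * E⁻¹) T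
        fun k => if (k : ℕ) < r then 0 else phases A k.rev := by
  obtain ⟨T, hAinv, hEinv⟩ := mem_Sp_iff.1 hE
  rw [hA.phases_inv] at hAinv hEinv
  have hEdet := (isUnit_iff_isUnit_det E).1 (isUnit_nonsing_inv_iff.1 hEinv.isUnit)
  have hAdet := (isUnit_iff_isUnit_det A).1 hA.1.isUnit
  have hdecomp := hEinv.inv
  have hdecomp' := hEinv.mul_inv_mul hAinv
  rw [nonsing_inv_nonsing_inv _ hEdet] at hdecomp
  rw [nonsing_inv_nonsing_inv _ hAdet] at hdecomp'
  refine ⟨T⁻¹ᴴ, T, ?_, ?_⟩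
  · convert hdecomp using 1
    ext k
    simp only [halfTruncation, Pi.neg_apply]
    split_ifs <;> ring
  · convert hdecomp' using 1
    ext k
    simp only [halfTruncation, Pi.add_apply, Pi.sub_apply]
    split_ifs <;> ring

lemma NegativeImaginary.isSectorial_and_prank_le_of_inv_mem_Sp [NeZero n]
    (hA : NegativeImaginary A) (hE : E⁻¹ ∈ Sp A⁻¹ r) : IsSectorial E ∧ prank E ≤ r := by
  obtain ⟨S, -, hS, -⟩ := hA.exists_isSectorialDecomp_of_inv_mem_Sp hE
  have hmem (k : Fin n) :
      halfTruncation (fun k => phases A k.rev) r k ∈ Set.Ioc (-Real.pi) 0 := by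
    obtain ⟨hlb, hub⟩ := hA.2 k.rev
    rw [halfTruncation]
    split_ifs <;> constructor <;> linarith [Real.pi_pos]
  obtain ⟨σ, hσ⟩ := hS.exists_phases_eq_comp_perm_of_mem_Ioc hmem
  exact ⟨(hS.negativeImaginary hmem).1,
    prank_le_of_phases_eq_comp_perm hσ fun k hk => if_neg hk.not_gt⟩

lemma NegativeImaginary.inv_mul_mul_inv_and_gauge_phases_eq_of_inv_mem_Sp [NeZero n]
    {Φ : (Fin n → ℝ) → ℝ} (hΦ : IsSymmetricGauge Φ) (hA : NegativeImaginary A)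
    (hE : E⁻¹ ∈ Sp A⁻¹ r) :
    NegativeImaginary (E⁻¹ * A * E⁻¹) ∧
      Φ (phases (E⁻¹ * A * E⁻¹)) = Φ fun k => if (k : ℕ) < n - r then phases A k else 0 := by
  obtain ⟨-, T, -, hT⟩ := hA.exists_isSectorialDecomp_of_inv_mem_Sp hE
  have hmem (k : Fin n) :
      (if (k : ℕ) < r then 0 else phases A k.rev) ∈ Set.Ioc (-Real.pi) 0 := by
    split_ifs
    · exact ⟨neg_lt_zero.2 Real.pi_pos, le_rfl⟩
    · exact hA.2 k.rev
  obtain ⟨σ, hσ⟩ := hT.exists_phases_eq_comp_perm_of_mem_Ioc hmem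
  exact ⟨hT.negativeImaginary hmem, by rw [hσ, hΦ.perm, hΦ.truncation_rev]⟩

end Attainment

/-- low phase-rank approximation, negative-imaginary case. -/
theorem low_prank_approximation_negative_imaginary
    (hn : 1 ≤ n) (Φ : (Fin n → ℝ) → ℝ) (hΦ : IsSymmetricGauge Φ)
    (A : Matrix (Fin n) (Fin n) ℂ) (hA : NegativeImaginary A)
    (r : ℕ) (hr : r ≤ n) :
    IsLeast {v : ℝ | ∃ E : Matrix (Fin n) (Fin n) ℂ, IsSectorial E ∧ prank E ≤ r ∧
        NegativeImaginary (E⁻¹ * A * E⁻¹) ∧ v = Φ (phases (E⁻¹ * A * E⁻¹))}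
      (Φ fun k => if (k : ℕ) < n - r then phases A k else 0) ∧
    ∀ E : Matrix (Fin n) (Fin n) ℂ, E⁻¹ ∈ Sp A⁻¹ r →
      IsSectorial E ∧ prank E ≤ r ∧ NegativeImaginary (E⁻¹ * A * E⁻¹) ∧
      Φ (phases (E⁻¹ * A * E⁻¹)) = Φ fun k => if (k : ℕ) < n - r then phases A k else 0 := by
  have : NeZero n := ⟨by lia⟩
  have hattained (E : Matrix (Fin n) (Fin n) ℂ) (hE : E⁻¹ ∈ Sp A⁻¹ r) :
      IsSectorial E ∧ prank E ≤ r ∧ NegativeImaginary (E⁻¹ * A * E⁻¹) ∧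
        Φ (phases (E⁻¹ * A * E⁻¹)) = Φ fun k => if (k : ℕ) < n - r then phases A k else 0 := by
    obtain ⟨hEs, hEr⟩ := hA.isSectorial_and_prank_le_of_inv_mem_Sp hE
    exact ⟨hEs, hEr, hA.inv_mul_mul_inv_and_gauge_phases_eq_of_inv_mem_Sp hΦ hE⟩
  refine ⟨⟨?_, ?_⟩, hattained⟩
  · obtain ⟨F, hF, hF_unit⟩ := exists_mem_Sp hA.isSectorial_inv r
    rw [← nonsing_inv_nonsing_inv F ((isUnit_iff_isUnit_det F).1 hF_unit)] at hF
    obtain ⟨hEs, hEr, hB, hval⟩ := hattained F⁻¹ hF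
    exact ⟨F⁻¹, hEs, hEr, hB, hval.symm⟩
  · rintro v ⟨E, hE, hEr, hB, rfl⟩
    exact gauge_truncation_phases_le hΦ hA hE hEr hB

end LowPrank
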